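/- arXiv:0903.1532 — 2 statements merged into one kernel-verified Lean document; each statement's English description precedes it below -/
import Mathlib

section
/- Let [ω_1, …, ω_p] be a global orbit pattern realized by some function in F_N, let j be an index with ω_j ≥ 2, and let h be an integer with 1 ≤ h ≤ ω_j − 1. Then the number of f ∈ F_N with gop(f) = [ω_1, …, ω_j, …, ω_p] equals (h + ω_{j+1} + ⋯ + ω_p) times the number of f ∈ F_N with gop(f) = [ω_1, …, ω_{j−1}, ω_j − h, h, ω_{j+1}, …, ω_p]. -/
/-!
A self-map `f` of `Fin N` is a rooted forest whose roots are the periodic points, together with a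
permutation of the roots. Number the trees of the forest by increasing least elements. A component
of `f` is a union of trees permuted cyclically, so its least element is that of its first tree, and
the pattern of `f` equals the pattern of the induced permutation of tree numbers
(`TreeIndexing.gop_build`). Sorting maps by their forest `core f` therefore reduces the claim to
permutations of `Fin m` (`TreeIndexing.card_fiber`, `card_gop_eq_sum`).

For permutations let `c(m, L)` be the number with pattern `L` (`permCount`). Deleting `0` when it is
fixed gives `c(m + 1, 1 :: L) = c(m, L)`. Otherwise the successor `b` of `0` can be removed from its
cycle. This shortens the first cycle by one and affects no component minimum, and `b` can be any of
the `m` nonzero points, so `c(m + 1, (w + 2) :: L) = m * c(m, (w + 1) :: L)`. Iterating,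
`c(n + w, w :: L) = (n + w - 1)(n + w - 2) ⋯ (n + 1) * c(n, L)`. Reading off a cycle of length `w`,
instead of cycles of lengths `w - h` and `h`, contributes the additional factor `n + h`, where `n`
is the number of points left after these cycles, i.e. the sum of the remaining orders
(`permCount_split`).
-/

open scoped Classical

/-- Two points are in the same component of `X_N` under `f`:
`x ~ y` iff some forward iterate of `x` equals some forward iterate of `y`. -/
def sameComp {N : ℕ} (f : Fin N → Fin N) (x y : Fin N) : Prop :=
  ∃ k l : ℕ, f^[k] x = f^[l] y

/-- The order `ω(x, f)` of a point `x`: the length of the periodic cycle contained in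
the component of `x`, i.e. the least `p > 0` such that the orbit of `x` is eventually
`p`-periodic. -/
noncomputable def gopOrd {N : ℕ} (f : Fin N → Fin N) (x : Fin N) : ℕ :=
  sInf {p : ℕ | 0 < p ∧ ∃ K : ℕ, f^[K + p] x = f^[K] x}

/-- The global orbit pattern of `f`: the list of orders of the least elements of the
components of `X_N` under `f`, listed in increasing order of those least elements. -/
noncomputable def gop {N : ℕ} (f : Fin N → Fin N) : List ℕ :=
  ((Finset.univ.filter (fun x : Fin N => ∀ y : Fin N, sameComp f x y → x ≤ y)).sort (· ≤ ·)).map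
    (gopOrd f)

/-! ### Components, orders and the list of component minima -/

theorem sameComp_refl {N : ℕ} (f : Fin N → Fin N) (x : Fin N) : sameComp f x x := ⟨0, 0, rfl⟩

theorem sameComp_symm {N : ℕ} {f : Fin N → Fin N} {x y : Fin N} (h : sameComp f x y) :
    sameComp f y x := by
  obtain ⟨k, l, h⟩ := h
  exact ⟨l, k, h.symm⟩

theorem sameComp_trans {N : ℕ} {f : Fin N → Fin N} {x y z : Fin N} (h₁ : sameComp f x y)
    (h₂ : sameComp f y z) : sameComp f x z := by
  obtain ⟨k, l, h₁⟩ := h₁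
  obtain ⟨k', l', h₂⟩ := h₂
  refine ⟨k' + k, l + l', ?_⟩
  rw [Function.iterate_add_apply, h₁, ← Function.iterate_add_apply, Nat.add_comm k' l,
    Function.iterate_add_apply, h₂, ← Function.iterate_add_apply]

theorem sameComp_apply {N : ℕ} (f : Fin N → Fin N) (x : Fin N) : sameComp f x (f x) :=
  ⟨1, 0, rfl⟩

/-- A map that moves each edge `x → f x` into a single component of `g` maps components of `f`
into components of `g`. -/
theorem sameComp_map {N M : ℕ} {f : Fin N → Fin N} {g : Fin M → Fin M} (π : Fin N → Fin M)
    (hπ : ∀ x, sameComp g (π x) (π (f x))) {x y : Fin N} (h : sameComp f x y) :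
    sameComp g (π x) (π y) := by
  have key : ∀ (k : ℕ) (x : Fin N), sameComp g (π x) (π (f^[k] x)) := by
    intro k
    induction k with
    | zero => intro x; exact sameComp_refl _ _
    | succ k ih =>
      intro x
      rw [Function.iterate_succ_apply]
      exact sameComp_trans (hπ x) (ih (f x))
  obtain ⟨k, l, h⟩ := h
  have := key k x
  rw [h] at this
  exact sameComp_trans this (sameComp_symm (key l y))

theorem gopOrd_apply {N : ℕ} (f : Fin N → Fin N) (x : Fin N) : gopOrd f (f x) = gopOrd f x := by
  unfold gopOrd
  congr 1
  ext p
  simp only [Set.mem_ofPred_eq, and_congr_right_iff]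
  intro _
  constructor
  · rintro ⟨K, hK⟩
    refine ⟨K + 1, ?_⟩
    rw [← Function.iterate_succ_apply, ← Function.iterate_succ_apply] at hK
    rwa [show K + 1 + p = (K + p).succ by omega]
  · rintro ⟨K, hK⟩
    refine ⟨K, ?_⟩
    rw [← Function.iterate_succ_apply, ← Function.iterate_succ_apply, Function.iterate_succ_apply',
      Function.iterate_succ_apply', hK]

theorem gopOrd_eq_of_sameComp {N : ℕ} {f : Fin N → Fin N} {x y : Fin N} (h : sameComp f x y) :
    gopOrd f x = gopOrd f y := by
  have key : ∀ (k : ℕ) (x : Fin N), gopOrd f (f^[k] x) = gopOrd f x := by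
    intro k
    induction k with
    | zero => intro x; rfl
    | succ k ih => intro x; rw [Function.iterate_succ_apply, ih, gopOrd_apply]
  obtain ⟨k, l, h⟩ := h
  rw [← key k x, h, key l y]

/-- An injective map carrying the `g`-orbit of `i` onto the `f`-orbit of `e i` preserves the
order. -/
theorem gopOrd_eq_of_iterate {N M : ℕ} {f : Fin N → Fin N} {g : Fin M → Fin M} {e : Fin M → Fin N}
    (he : Function.Injective e) (i : Fin M) (h : ∀ k, f^[k] (e i) = e (g^[k] i)) :
    gopOrd f (e i) = gopOrd g i := by
  unfold gopOrd
  simp only [h, he.eq_iff]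

theorem gopOrd_eq_minimalPeriod {N : ℕ} {f : Fin N → Fin N} (hf : Function.Injective f)
    (x : Fin N) : gopOrd f x = Function.minimalPeriod f x := by
  have hx : 0 < Function.minimalPeriod f x :=
    Function.minimalPeriod_pos_of_mem_periodicPts (hf.mem_periodicPts x)
  unfold gopOrd
  apply le_antisymm
  · apply Nat.sInf_le
    exact ⟨hx, 0, by simp⟩
  · apply le_csInf
    · exact ⟨_, hx, 0, by simp⟩
    · rintro p ⟨hp, K, hK⟩
      rw [Function.iterate_add_apply] at hK
      exact Function.IsPeriodicPt.minimalPeriod_le hp (hf.iterate K hK)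

/-- `x` is the least element of its component under `f`. -/
def IsCompMin {N : ℕ} (f : Fin N → Fin N) (x : Fin N) : Prop :=
  ∀ y : Fin N, sameComp f x y → x ≤ y

/-- The least elements of the components of `f`, in increasing order. -/
noncomputable def minsList {N : ℕ} (f : Fin N → Fin N) : List (Fin N) :=
  (Finset.univ.filter (fun x : Fin N => ∀ y : Fin N, sameComp f x y → x ≤ y)).sort (· ≤ ·)

theorem gop_eq_map {N : ℕ} (f : Fin N → Fin N) : gop f = (minsList f).map (gopOrd f) := rfl

theorem mem_minsList {N : ℕ} {f : Fin N → Fin N} {x : Fin N} :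
    x ∈ minsList f ↔ IsCompMin f x := by
  simp [minsList, IsCompMin]

theorem sortedLT_minsList {N : ℕ} (f : Fin N → Fin N) : (minsList f).SortedLT :=
  Finset.sortedLT_sort _

theorem minsList_eq {N : ℕ} {f : Fin N → Fin N} {l : List (Fin N)} (hl : l.SortedLT)
    (h : ∀ x, x ∈ l ↔ IsCompMin f x) : minsList f = l :=
  (sortedLT_minsList f).eq_of_mem_iff hl fun x => by rw [mem_minsList, h]

theorem IsCompMin.eq {N : ℕ} {f : Fin N → Fin N} {x y : Fin N} (hx : IsCompMin f x)
    (hy : IsCompMin f y) (h : sameComp f x y) : x = y :=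
  le_antisymm (hx y h) (hy x (sameComp_symm h))

theorem exists_isCompMin {N : ℕ} (f : Fin N → Fin N) (y : Fin N) :
    ∃ x, IsCompMin f x ∧ x ≤ y ∧ sameComp f x y := by
  obtain ⟨x, hx, hmin⟩ := (Finset.univ.filter (fun x => sameComp f x y)).exists_min_image id
    ⟨y, by simp [sameComp_refl]⟩
  simp only [Finset.mem_filter, Finset.mem_univ, true_and, id] at hx hmin
  exact ⟨x, fun z hz => hmin z (sameComp_trans (sameComp_symm hz) hx),
    hmin y (sameComp_refl f y), hx⟩

/-- If `ψ` is increasing, compatible with components in both directions, and its values bound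
every point of `Fin N` from below within its component, then `ψ` matches component minima. -/
theorem minsList_eq_map {N M : ℕ} {f : Fin N → Fin N} {g : Fin M → Fin M} {ψ : Fin M → Fin N}
    (hψ : StrictMono ψ) (h₁ : ∀ y, ∃ i, ψ i ≤ y ∧ sameComp f (ψ i) y)
    (h₂ : ∀ i j, sameComp f (ψ i) (ψ j) ↔ sameComp g i j) :
    minsList f = (minsList g).map ψ := by
  apply minsList_eq
  · rw [List.sortedLT_iff_pairwise, List.pairwise_map]
    exact (sortedLT_minsList g).pairwise.imp fun h => hψ h
  · intro x
    simp only [List.mem_map, mem_minsList]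
    constructor
    · rintro ⟨i, hi, rfl⟩ y hy
      obtain ⟨j, hj, hjy⟩ := h₁ y
      refine le_trans (hψ.monotone (hi j ?_)) hj
      rw [← h₂]
      exact sameComp_trans hy (sameComp_symm hjy)
    · intro hx
      obtain ⟨i, hi, hix⟩ := h₁ x
      obtain rfl : ψ i = x := le_antisymm hi (hx _ (sameComp_symm hix))
      exact ⟨i, fun j hj => hψ.le_iff_le.1 (hx _ ((h₂ i j).2 hj)), rfl⟩

/-- On `Fin (n + 1)` the list of component minima starts with `0`, and every other minimum lies
in a component different from that of `0`. -/
theorem minsList_zero_cons {n : ℕ} (f : Fin (n + 1) → Fin (n + 1)) :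
    ∃ t, minsList f = 0 :: t ∧ ∀ i ∈ t, ¬ sameComp f i 0 := by
  have h0 : IsCompMin f 0 := fun y _ => Fin.zero_le y
  have hs := (sortedLT_minsList f).pairwise
  have hm : (0 : Fin (n + 1)) ∈ minsList f := mem_minsList.2 h0
  have hall : ∀ i ∈ minsList f, IsCompMin f i := fun i hi => mem_minsList.1 hi
  cases hl : minsList f with
  | nil => rw [hl] at hm; simp at hm
  | cons a t =>
    rw [hl] at hs hm hall
    rw [List.pairwise_cons] at hs
    have ha : a = 0 := by
      rcases List.mem_cons.1 hm with h | h
      · exact h.symm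
      · exact absurd (hs.1 0 h) (by simp)
    subst ha
    refine ⟨t, rfl, fun i hi hc => ?_⟩
    have := (hall i (List.mem_cons_of_mem _ hi)).eq h0 hc
    have := hs.1 i hi
    simp_all

theorem gop_cons {n : ℕ} (f : Fin (n + 1) → Fin (n + 1)) : ∃ l, gop f = gopOrd f 0 :: l := by
  obtain ⟨t, ht, -⟩ := minsList_zero_cons f
  exact ⟨t.map (gopOrd f), by rw [gop_eq_map, ht, List.map_cons]⟩

/-! ### Counting permutations with a prescribed pattern -/

/-- The number of permutations of `Fin m`, encoded as injective self-maps, with pattern `L`. -/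
noncomputable def permCount (m : ℕ) (L : List ℕ) : ℕ :=
  Nat.card {g : Fin m → Fin m // Function.Injective g ∧ gop g = L}

theorem permCount_zero_cons (a : ℕ) (L : List ℕ) : permCount 0 (a :: L) = 0 := by
  unfold permCount
  rw [Nat.card_eq_zero]
  left
  constructor
  rintro ⟨g, -, hg⟩
  have : minsList g = [] := List.eq_nil_iff_forall_not_mem.2 fun x => x.elim0
  rw [gop_eq_map, this] at hg
  simp at hg

theorem permCount_succ_nil (n : ℕ) : permCount (n + 1) [] = 0 := by
  unfold permCount
  rw [Nat.card_eq_zero]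
  left
  constructor
  rintro ⟨g, -, hg⟩
  obtain ⟨l, hl⟩ := gop_cons g
  rw [hl] at hg
  simp at hg

theorem permCount_zero_head (m : ℕ) (L : List ℕ) : permCount m (0 :: L) = 0 := by
  cases m with
  | zero => exact permCount_zero_cons _ _
  | succ n =>
    unfold permCount
    rw [Nat.card_eq_zero]
    left
    constructor
    rintro ⟨g, hinj, hg⟩
    obtain ⟨l, hl⟩ := gop_cons g
    rw [hl, gopOrd_eq_minimalPeriod hinj] at hg
    have := Function.minimalPeriod_pos_of_mem_periodicPts (hinj.mem_periodicPts 0)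
    simp only [List.cons.injEq] at hg
    omega

/-- Adjoin `0` as a new fixed point below all the old points. -/
def addFixed {n : ℕ} (g : Fin n → Fin n) : Fin (n + 1) → Fin (n + 1) :=
  Fin.cons 0 fun i => (g i).succ

theorem addFixed_zero {n : ℕ} (g : Fin n → Fin n) : addFixed g 0 = 0 := rfl

theorem addFixed_succ {n : ℕ} (g : Fin n → Fin n) (i : Fin n) :
    addFixed g i.succ = (g i).succ := rfl

theorem addFixed_iterate {n : ℕ} (g : Fin n → Fin n) (k : ℕ) (i : Fin n) :
    (addFixed g)^[k] i.succ = (g^[k] i).succ := by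
  induction k generalizing i with
  | zero => rfl
  | succ k ih => rw [Function.iterate_succ_apply, addFixed_succ, ih, ← Function.iterate_succ_apply]

theorem addFixed_injective {n : ℕ} {g : Fin n → Fin n} (hg : Function.Injective g) :
    Function.Injective (addFixed g) := by
  intro x y h
  induction x using Fin.cases <;> induction y using Fin.cases <;>
    simp_all [addFixed_zero, addFixed_succ, hg.eq_iff, Fin.succ_ne_zero, (Fin.succ_ne_zero _).symm]

theorem gop_addFixed {n : ℕ} {g : Fin n → Fin n} (hg : Function.Injective g) :
    gop (addFixed g) = 1 :: gop g := by
  have hz : ∀ i : Fin n, ¬ sameComp (addFixed g) i.succ 0 := by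
    rintro i ⟨k, l, h⟩
    rw [addFixed_iterate, Function.iterate_fixed (addFixed_zero g)] at h
    exact Fin.succ_ne_zero _ h
  have hs : ∀ i j : Fin n, sameComp (addFixed g) i.succ j.succ ↔ sameComp g i j := by
    intro i j
    simp [sameComp, addFixed_iterate]
  have hm : minsList (addFixed g) = 0 :: (minsList g).map Fin.succ := by
    apply minsList_eq
    · rw [List.sortedLT_iff_pairwise, List.pairwise_cons, List.pairwise_map]
      refine ⟨by simp +contextual [Fin.succ_pos], ?_⟩
      exact (sortedLT_minsList g).pairwise.imp fun h => Fin.succ_lt_succ_iff.2 h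
    · intro x
      induction x using Fin.cases with
      | zero => simp [IsCompMin]
      | succ i =>
        simp only [List.mem_cons, Fin.succ_ne_zero, List.mem_map, Fin.succ_inj, mem_minsList,
          exists_eq_right, false_or]
        constructor
        · intro hi y
          induction y using Fin.cases with
          | zero => intro h; exact absurd h (hz i)
          | succ j => intro h; exact Fin.succ_le_succ_iff.2 (hi j ((hs i j).1 h))
        · intro hi j hj
          exact Fin.succ_le_succ_iff.1 (hi j.succ ((hs i j).2 hj))
  rw [gop_eq_map, gop_eq_map, hm, List.map_cons, List.map_map,
    gopOrd_eq_minimalPeriod (addFixed_injective hg)]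
  congr 1
  · exact Function.minimalPeriod_eq_one_iff_isFixedPt.2 (addFixed_zero g)
  apply List.map_congr_left
  intro i _
  exact gopOrd_eq_of_iterate (Fin.succ_injective n) i fun k => addFixed_iterate g k i

theorem permCount_one_cons (n : ℕ) (L : List ℕ) :
    permCount (n + 1) (1 :: L) = permCount n L := by
  unfold permCount
  symm
  apply Nat.card_eq_of_bijective (fun g : {g : Fin n → Fin n // Function.Injective g ∧ gop g = L} =>
    (⟨addFixed g.1, addFixed_injective g.2.1, by rw [gop_addFixed g.2.1, g.2.2]⟩ :
      {g : Fin (n + 1) → Fin (n + 1) // Function.Injective g ∧ gop g = 1 :: L}))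
  constructor
  · rintro ⟨g, hg⟩ ⟨g', hg'⟩ h
    simp only [Subtype.mk.injEq] at h ⊢
    funext i
    have := congrFun h i.succ
    rw [addFixed_succ, addFixed_succ] at this
    exact Fin.succ_injective n this
  · rintro ⟨f, hinj, hf⟩
    obtain ⟨l, hl⟩ := gop_cons f
    have h0 : f 0 = 0 := by
      rw [hl, gopOrd_eq_minimalPeriod hinj, List.cons.injEq] at hf
      exact Function.minimalPeriod_eq_one_iff_isFixedPt.1 hf.1
    have hne : ∀ i : Fin n, ∃ j : Fin n, j.succ = f i.succ := by
      intro i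
      apply Fin.exists_succ_eq.2
      intro h
      exact Fin.succ_ne_zero i (hinj (h.trans h0.symm))
    choose g hg using hne
    have hfg : addFixed g = f := by
      funext x
      induction x using Fin.cases with
      | zero => rw [addFixed_zero, h0]
      | succ i => rw [addFixed_succ, hg]
    have hginj : Function.Injective g := by
      intro i j hij
      have : f i.succ = f j.succ := by rw [← hg, ← hg, hij]
      exact Fin.succ_injective n (hinj this)
    refine ⟨⟨g, hginj, ?_⟩, Subtype.ext hfg⟩
    rw [← hfg, gop_addFixed hginj] at hf
    exact (List.cons.inj hf).2

/-- Rename the points of `Fin (n + 1)` increasingly by `Fin (n + 2) \ {b}` and insert `b` into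
the cycle of `0`, directly after `0`. -/
noncomputable def insertAfterZero {n : ℕ} (b : Fin (n + 2)) (g : Fin (n + 1) → Fin (n + 1)) :
    Fin (n + 2) → Fin (n + 2) :=
  b.insertNth (α := fun _ => Fin (n + 2)) (b.succAbove (g 0))
    fun i => if i = 0 then b else b.succAbove (g i)

section Insert

variable {n : ℕ} {b : Fin (n + 2)} {g : Fin (n + 1) → Fin (n + 1)}

theorem insertAfterZero_self : insertAfterZero b g b = b.succAbove (g 0) := by
  simp [insertAfterZero]

theorem insertAfterZero_zero (hb : b ≠ 0) : insertAfterZero b g 0 = b := by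
  have : insertAfterZero b g (b.succAbove 0) = b := by
    simp [insertAfterZero, -Fin.succAbove_ne_zero_zero]
  rwa [Fin.succAbove_ne_zero_zero hb] at this

theorem insertAfterZero_succAbove {i : Fin (n + 1)} (hi : i ≠ 0) :
    insertAfterZero b g (b.succAbove i) = b.succAbove (g i) := by
  simp [insertAfterZero, hi]

theorem insertAfterZero_injective (hb : b ≠ 0) (hg : Function.Injective g) :
    Function.Injective (insertAfterZero b g) := by
  have hz : ∀ x, insertAfterZero b g x = b → x = 0 := by
    intro x hx
    rcases Fin.eq_self_or_eq_succAbove b x with rfl | ⟨i, rfl⟩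
    · rw [insertAfterZero_self] at hx
      exact absurd hx (Fin.succAbove_ne _ _)
    · by_cases hi : i = 0
      · rw [hi, Fin.succAbove_ne_zero_zero hb]
      · rw [insertAfterZero_succAbove hi] at hx
        exact absurd hx (Fin.succAbove_ne _ _)
  have hcase : ∀ x, x = 0 ∨ ∃ i, insertAfterZero b g x = b.succAbove (g i) ∧
      x = if i = 0 then b else b.succAbove i := by
    intro x
    rcases Fin.eq_self_or_eq_succAbove b x with h | ⟨i, h⟩
    · right
      exact ⟨0, by rw [h, insertAfterZero_self], by simp [h]⟩
    · by_cases hi : i = 0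
      · left
        rw [h, hi, Fin.succAbove_ne_zero_zero hb]
      · right
        exact ⟨i, by rw [h, insertAfterZero_succAbove hi], by simp [h, hi]⟩
  intro x y h
  rcases hcase x with rfl | ⟨i, hi, hxi⟩
  · rw [insertAfterZero_zero hb] at h
    exact (hz y h.symm).symm
  · rcases hcase y with rfl | ⟨j, hj, hyj⟩
    · rw [insertAfterZero_zero hb] at h
      exact hz x h
    · rw [hi, hj, Fin.succAbove_right_inj, hg.eq_iff] at h
      rw [hxi, hyj, h]

theorem sameComp_insertAfterZero (hb : b ≠ 0) (i j : Fin (n + 1)) :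
    sameComp (insertAfterZero b g) (b.succAbove i) (b.succAbove j) ↔ sameComp g i j := by
  constructor
  · -- The retraction sending `b` to `0` maps edges to edges or collapses them.
    let π : Fin (n + 2) → Fin (n + 1) := b.insertNth (α := fun _ => Fin (n + 1)) 0 id
    have hπb : π b = 0 := by simp [π]
    have hπ : ∀ i, π (b.succAbove i) = i := by intro i; simp [π]
    intro h
    have := sameComp_map (g := g) π (fun x => ?_) h
    · rwa [hπ, hπ] at this
    · rcases Fin.eq_self_or_eq_succAbove b x with rfl | ⟨i, rfl⟩
      · rw [insertAfterZero_self, hπb, hπ]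
        exact sameComp_apply _ _
      · by_cases hi : i = 0
        · rw [hπ, hi, Fin.succAbove_ne_zero_zero hb, insertAfterZero_zero hb, hπb]
          exact sameComp_refl _ _
        · rw [insertAfterZero_succAbove hi, hπ, hπ]
          exact sameComp_apply _ _
  · apply sameComp_map
    intro i
    by_cases hi : i = 0
    · rw [hi]
      refine ⟨2, 0, ?_⟩
      rw [Fin.succAbove_ne_zero_zero hb]
      change insertAfterZero b g (insertAfterZero b g 0) = _
      rw [insertAfterZero_zero hb, insertAfterZero_self]
      rfl
    · rw [← insertAfterZero_succAbove hi]
      exact sameComp_apply _ _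

/-- As long as the `g`-orbit of `i` avoids `0`, insertion leaves it unchanged. -/
theorem insertAfterZero_iterate (k : ℕ) (i : Fin (n + 1)) (h : ∀ l < k, g^[l] i ≠ 0) :
    (insertAfterZero b g)^[k] (b.succAbove i) = b.succAbove (g^[k] i) := by
  induction k with
  | zero => rfl
  | succ k ih =>
    rw [Function.iterate_succ_apply', ih fun l hl => h l (by omega),
      insertAfterZero_succAbove (h k (by omega)), Function.iterate_succ_apply' g]

theorem gopOrd_insertAfterZero_of_ne {i : Fin (n + 1)} (h : ¬ sameComp g i 0) :
    gopOrd (insertAfterZero b g) (b.succAbove i) = gopOrd g i :=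
  gopOrd_eq_of_iterate (Fin.succAbove_right_injective) i fun k =>
    insertAfterZero_iterate k i fun l _ hl => h ⟨l, 0, hl⟩

theorem gopOrd_insertAfterZero_zero (hb : b ≠ 0) (hg : Function.Injective g) :
    gopOrd (insertAfterZero b g) 0 = gopOrd g 0 + 1 := by
  rw [gopOrd_eq_minimalPeriod hg, gopOrd_eq_minimalPeriod (insertAfterZero_injective hb hg)]
  set p := Function.minimalPeriod g 0 with hp
  have hpos : 0 < p := Function.minimalPeriod_pos_of_mem_periodicPts (hg.mem_periodicPts 0)
  -- The orbit of `0` runs `0, b, g 0, g² 0, …` up to renaming.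
  have hit : ∀ k < p, (insertAfterZero b g)^[k + 2] 0 = b.succAbove (g^[k + 1] 0) := by
    intro k hk
    rw [Function.iterate_succ_apply, Function.iterate_succ_apply, insertAfterZero_zero hb,
      insertAfterZero_self, insertAfterZero_iterate, ← Function.iterate_succ_apply]
    intro l hl h
    rw [← Function.iterate_succ_apply] at h
    exact Function.not_isPeriodicPt_of_pos_of_lt_minimalPeriod (Nat.succ_ne_zero l)
      (by omega) h
  have hb0 : b.succAbove 0 = 0 := Fin.succAbove_ne_zero_zero hb
  apply le_antisymm
  · apply Function.IsPeriodicPt.minimalPeriod_le (Nat.succ_pos p)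
    have := hit (p - 1) (by omega)
    rw [show p - 1 + 2 = p + 1 by omega, show p - 1 + 1 = p by omega, hp,
      Function.iterate_minimalPeriod, hb0] at this
    exact this
  · by_contra! hlt
    set q := Function.minimalPeriod (insertAfterZero b g) 0 with hq
    have hqpos : 0 < q := Function.minimalPeriod_pos_of_mem_periodicPts
      ((insertAfterZero_injective hb hg).mem_periodicPts 0)
    have hq0 : (insertAfterZero b g)^[q] 0 = 0 := Function.iterate_minimalPeriod
    obtain ⟨k, hk⟩ : ∃ k, q = k + 1 := ⟨q - 1, by omega⟩
    rw [hk] at hq0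
    cases k with
    | zero =>
      rw [Function.iterate_one, insertAfterZero_zero hb] at hq0
      exact hb hq0
    | succ k =>
      rw [hit k (by omega)] at hq0
      have h0 : g^[k + 1] 0 = 0 := Fin.succAbove_right_injective (hq0.trans hb0.symm)
      exact Function.not_isPeriodicPt_of_pos_of_lt_minimalPeriod (Nat.succ_ne_zero k)
        (by omega) h0

/-- Inserting a point after `0` lengthens the first cycle by one and changes nothing else. -/
theorem gop_insertAfterZero (hb : b ≠ 0) (hg : Function.Injective g) (w : ℕ) (L : List ℕ) :
    gop (insertAfterZero b g) = (w + 1) :: L ↔ gop g = w :: L := by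
  have hm : minsList (insertAfterZero b g) = (minsList g).map b.succAbove := by
    apply minsList_eq_map (Fin.strictMono_succAbove b)
    · intro y
      rcases Fin.eq_self_or_eq_succAbove b y with h | ⟨i, h⟩
      · refine ⟨0, ?_, ?_⟩
        · rw [Fin.succAbove_ne_zero_zero hb]
          exact Fin.zero_le y
        · rw [Fin.succAbove_ne_zero_zero hb, h]
          have := sameComp_apply (insertAfterZero b g) 0
          rwa [insertAfterZero_zero hb] at this
      · exact ⟨i, h.ge, h ▸ sameComp_refl _ _⟩
    · exact sameComp_insertAfterZero hb
  obtain ⟨t, ht, hne⟩ := minsList_zero_cons g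
  rw [gop_eq_map, gop_eq_map, hm, ht]
  simp only [List.map_cons, List.map_map, List.cons.injEq, Fin.succAbove_ne_zero_zero hb,
    gopOrd_insertAfterZero_zero hb hg, Nat.add_right_cancel_iff]
  have : t.map (gopOrd (insertAfterZero b g) ∘ b.succAbove) = t.map (gopOrd g) :=
    List.map_congr_left fun i hi => gopOrd_insertAfterZero_of_ne (hne i hi)
  rw [this]

end Insert

/-- A permutation of `Fin (n + 1)` not fixing `0` arises from a unique permutation of `Fin n` by
inserting one of the `n` nonzero points after `0`. -/
theorem permCount_add_two_cons (n w : ℕ) (L : List ℕ) :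
    permCount (n + 1) ((w + 2) :: L) = n * permCount n ((w + 1) :: L) := by
  cases n with
  | zero =>
    rw [Nat.zero_mul]
    unfold permCount
    rw [Nat.card_eq_zero]
    left
    constructor
    rintro ⟨g, hinj, hg⟩
    obtain ⟨l, hl⟩ := gop_cons g
    rw [hl, gopOrd_eq_minimalPeriod hinj, Function.minimalPeriod_eq_one_iff_isFixedPt.2
      (Fin.subsingleton_one.elim (g 0) 0)] at hg
    simp at hg
  | succ n =>
    unfold permCount
    rw [← Nat.card_fin (n + 1), ← Nat.card_prod, Nat.card_fin]
    symm
    apply Nat.card_eq_of_bijective (fun q : Fin (n + 1) ×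
        {g : Fin (n + 1) → Fin (n + 1) // Function.Injective g ∧ gop g = (w + 1) :: L} =>
      (⟨insertAfterZero q.1.succ q.2.1,
        insertAfterZero_injective (Fin.succ_ne_zero _) q.2.2.1,
        (gop_insertAfterZero (Fin.succ_ne_zero _) q.2.2.1 _ _).2 q.2.2.2⟩ :
        {g : Fin (n + 2) → Fin (n + 2) // Function.Injective g ∧ gop g = (w + 2) :: L}))
    constructor
    · rintro ⟨c, g, hg⟩ ⟨c', g', hg'⟩ h
      simp only [Subtype.mk.injEq] at h
      have h0 := congrFun h 0
      rw [insertAfterZero_zero (Fin.succ_ne_zero _), insertAfterZero_zero (Fin.succ_ne_zero _)]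
        at h0
      obtain rfl : c = c' := Fin.succ_injective _ h0
      have : g = g' := by
        funext i
        apply Fin.succAbove_right_injective (p := c.succ)
        by_cases hi : i = 0
        · rw [hi, ← insertAfterZero_self, ← insertAfterZero_self, h]
        · rw [← insertAfterZero_succAbove hi, ← insertAfterZero_succAbove hi, h]
      subst this
      rfl
    · rintro ⟨f, hinj, hf⟩
      have h0 : f 0 ≠ 0 := by
        intro h0
        obtain ⟨l, hl⟩ := gop_cons f
        rw [hl, gopOrd_eq_minimalPeriod hinj,
          Function.minimalPeriod_eq_one_iff_isFixedPt.2 h0] at hf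
        simp at hf
      obtain ⟨c, hc⟩ := Fin.exists_succ_eq.2 h0
      -- The point whose image under `f` is the image of `i` under the contracted permutation.
      let s : Fin (n + 1) → Fin (n + 2) := fun i => if i = 0 then c.succ else c.succ.succAbove i
      have hs : Function.Injective s := by
        intro i j hij
        by_cases hi : i = 0 <;> by_cases hj : j = 0
        · rw [hi, hj]
        · simp only [s, hi, hj, if_true, if_false] at hij
          exact absurd hij.symm (Fin.succAbove_ne _ _)
        · simp only [s, hi, hj, if_true, if_false] at hij
          exact absurd hij (Fin.succAbove_ne _ _)
        · simp only [s, hi, hj, if_false] at hij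
          exact Fin.succAbove_right_injective hij
      have hs0 : ∀ i, s i ≠ 0 := by
        intro i
        by_cases hi : i = 0
        · simp [s, hi]
        · simp only [s, hi, if_false]
          exact Fin.succAbove_ne_zero (Fin.succ_ne_zero _) hi
      have hne : ∀ i, ∃ j, c.succ.succAbove j = f (s i) := by
        intro i
        apply Fin.exists_succAbove_eq
        rw [hc]
        exact fun h => hs0 i (hinj h)
      choose g hg using hne
      have hginj : Function.Injective g := by
        intro i j hij
        apply hs
        apply hinj
        rw [← hg, ← hg, hij]
      have hfg : insertAfterZero c.succ g = f := by
        funext x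
        rcases Fin.eq_self_or_eq_succAbove c.succ x with rfl | ⟨i, rfl⟩
        · rw [insertAfterZero_self, hg]
          simp [s]
        · by_cases hi : i = 0
          · rw [hi, Fin.succAbove_ne_zero_zero (Fin.succ_ne_zero c),
              insertAfterZero_zero (Fin.succ_ne_zero c), hc]
          · rw [insertAfterZero_succAbove hi, hg]
            simp [s, hi]
      refine ⟨⟨c, g, hginj, ?_⟩, Subtype.ext hfg⟩
      rw [← gop_insertAfterZero (Fin.succ_ne_zero c) hginj, hfg, hf]

theorem permCount_eq_zero_of_lt (w : ℕ) (L : List ℕ) (m : ℕ) (h : m < w + 1) :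
    permCount m ((w + 1) :: L) = 0 := by
  induction w generalizing m with
  | zero =>
    obtain rfl : m = 0 := by omega
    exact permCount_zero_cons _ _
  | succ w ih =>
    cases m with
    | zero => exact permCount_zero_cons _ _
    | succ n => rw [permCount_add_two_cons, ih n (by omega), Nat.mul_zero]

theorem permCount_cons (n w : ℕ) (L : List ℕ) :
    permCount (n + w + 1) ((w + 1) :: L) = (n + w).descFactorial w * permCount n L := by
  induction w with
  | zero => simpa using permCount_one_cons n L
  | succ w ih =>
    rw [permCount_add_two_cons, ← Nat.add_assoc, ih, Nat.succ_descFactorial_succ, Nat.mul_assoc]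

theorem sum_eq_of_permCount_ne_zero (L : List ℕ) (m : ℕ) (h : permCount m L ≠ 0) :
    L.sum = m := by
  induction L generalizing m with
  | nil =>
    cases m with
    | zero => rfl
    | succ n => exact absurd (permCount_succ_nil n) h
  | cons a L ih =>
    cases a with
    | zero => exact absurd (permCount_zero_head m L) h
    | succ w =>
      by_cases hm : m < w + 1
      · exact absurd (permCount_eq_zero_of_lt w L m hm) h
      · obtain ⟨n, rfl⟩ : ∃ n, m = n + w + 1 := ⟨m - (w + 1), by omega⟩
        rw [permCount_cons] at h
        rw [List.sum_cons, ih n (right_ne_zero_of_mul h)]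
        omega

theorem descFactorial_split (n a b : ℕ) :
    (n + b + 1 + a).descFactorial (a + b + 1) =
      (n + b + 1 + a).descFactorial a * ((n + b + 1) * (n + b).descFactorial b) := by
  have := Nat.descFactorial_mul_descFactorial (n := n + b + 1 + a) (k := a) (m := a + b + 1)
    (by omega)
  rw [← this, show n + b + 1 + a - a = n + b + 1 by omega, show a + b + 1 - a = b + 1 by omega,
    Nat.succ_descFactorial_succ, Nat.mul_comm]

theorem permCount_split (a b : ℕ) (L₁ L₂ : List ℕ) (m : ℕ) :
    permCount m (L₁ ++ (a + b + 2) :: L₂) =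
      (b + 1 + L₂.sum) * permCount m (L₁ ++ (a + 1) :: (b + 1) :: L₂) := by
  induction L₁ generalizing m with
  | nil =>
    simp only [List.nil_append]
    by_cases hm : m < a + b + 2
    · rw [permCount_eq_zero_of_lt (a + b + 1) L₂ m hm]
      by_cases hma : m < a + 1
      · rw [permCount_eq_zero_of_lt a _ m hma, Nat.mul_zero]
      · obtain ⟨n, rfl⟩ : ∃ n, m = n + a + 1 := ⟨m - (a + 1), by omega⟩
        rw [permCount_cons, permCount_eq_zero_of_lt b L₂ n (by omega), Nat.mul_zero, Nat.mul_zero]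
    · obtain ⟨n, rfl⟩ : ∃ n, m = n + b + 1 + a + 1 := ⟨m - (a + b + 2), by omega⟩
      rw [permCount_cons (n + b + 1) a, permCount_cons n b,
        show n + b + 1 + a + 1 = n + (a + b + 1) + 1 by omega, permCount_cons n (a + b + 1),
        show n + (a + b + 1) = n + b + 1 + a by omega, descFactorial_split]
      by_cases h0 : permCount n L₂ = 0
      · simp [h0]
      · rw [sum_eq_of_permCount_ne_zero L₂ n h0]
        ring
  | cons x L₁ ih =>
    simp only [List.cons_append]
    cases x with
    | zero => rw [permCount_zero_head, permCount_zero_head, Nat.mul_zero]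
    | succ x =>
      by_cases hm : m < x + 1
      · rw [permCount_eq_zero_of_lt x _ m hm, permCount_eq_zero_of_lt x _ m hm, Nat.mul_zero]
      · obtain ⟨n, rfl⟩ : ∃ n, m = n + x + 1 := ⟨m - (x + 1), by omega⟩
        rw [permCount_cons, permCount_cons, ih]
        ring

/-! ### Reduction of arbitrary maps to permutations -/

/-- The rooted forest underlying `f`: periodic points are made fixed, the other values are kept. -/
noncomputable def core {N : ℕ} (f : Fin N → Fin N) (x : Fin N) : Fin N :=
  if x ∈ Function.periodicPts f then x else f x

theorem exists_iterate_mem_periodicPts {N : ℕ} (f : Fin N → Fin N) (x : Fin N) :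
    ∃ k, f^[k] x ∈ Function.periodicPts f := by
  obtain ⟨k, l, hkl, h⟩ := Finite.exists_ne_map_eq_of_infinite fun k : ℕ => f^[k] x
  wlog hlt : k < l generalizing k l
  · exact this l k hkl.symm h.symm (by omega)
  refine ⟨k, Function.mk_mem_periodicPts (n := l - k) (by omega) ?_⟩
  change f^[l - k] (f^[k] x) = f^[k] x
  rw [← Function.iterate_add_apply, Nat.sub_add_cancel hlt.le]
  exact h.symm

theorem exists_core_iterate_fixed {N : ℕ} (f : Fin N → Fin N) (x : Fin N) :
    ∃ k, core f ((core f)^[k] x) = (core f)^[k] x := by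
  obtain ⟨k, hk⟩ := exists_iterate_mem_periodicPts f x
  induction k generalizing x with
  | zero => exact ⟨0, if_pos hk⟩
  | succ k ih =>
    by_cases hx : x ∈ Function.periodicPts f
    · exact ⟨0, if_pos hx⟩
    · obtain ⟨l, hl⟩ := ih (f x) hk
      refine ⟨l + 1, ?_⟩
      rw [Function.iterate_succ_apply, show core f x = f x from if_neg hx]
      exact hl

/-- An indexing by `Fin m` of the trees of a rooted forest `f₀` (a map all of whose orbits end in
fixed points): `root i` is the root of the `i`-th tree, `low i` its least element, and `index x`
the number of the tree containing `x`. Trees are numbered by increasing least elements. -/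
structure TreeIndexing {N : ℕ} (f₀ : Fin N → Fin N) (m : ℕ) where
  root : Fin m → Fin N
  index : Fin N → Fin m
  low : Fin m → Fin N
  strictMono_low : StrictMono low
  root_fixed : ∀ i, f₀ (root i) = root i
  root_index : ∀ x, f₀ x = x → root (index x) = x
  index_root : ∀ i, index (root i) = i
  index_apply : ∀ x, index (f₀ x) = index x
  low_index_le : ∀ x, low (index x) ≤ x
  sameComp_low_root : ∀ i, sameComp f₀ (low i) (root i)
  sameComp_low_index : ∀ x, sameComp f₀ (low (index x)) x

theorem exists_treeIndexing {N : ℕ} (f₀ : Fin N → Fin N)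
    (h : ∀ x, ∃ k, f₀ (f₀^[k] x) = f₀^[k] x) : ∃ m, Nonempty (TreeIndexing f₀ m) := by
  choose k hk using h
  let s : Finset (Fin N) := Finset.univ.filter (IsCompMin f₀)
  have hmem : ∀ i, IsCompMin f₀ (s.orderEmbOfFin rfl i) := fun i =>
    (Finset.mem_filter.1 (s.orderEmbOfFin_mem rfl i)).2
  have hex : ∀ y, ∃ i, s.orderEmbOfFin rfl i ≤ y ∧ sameComp f₀ (s.orderEmbOfFin rfl i) y := by
    intro y
    obtain ⟨x, hx, hxy, hc⟩ := exists_isCompMin f₀ y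
    have hxs : x ∈ Set.range (s.orderEmbOfFin rfl) := by
      rw [Finset.range_orderEmbOfFin]
      exact Finset.mem_coe.2 (Finset.mem_filter.2 ⟨Finset.mem_univ _, hx⟩)
    obtain ⟨i, rfl⟩ := hxs
    exact ⟨i, hxy, hc⟩
  choose index hle hcomp using hex
  have hroot : ∀ x, sameComp f₀ x (f₀^[k x] x) := fun x => ⟨k x, 0, rfl⟩
  have huniq : ∀ i j, sameComp f₀ (s.orderEmbOfFin rfl i) (s.orderEmbOfFin rfl j) → i = j :=
    fun i j hij => (s.orderEmbOfFin rfl).injective ((hmem i).eq (hmem j) hij)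
  refine ⟨s.card, ⟨{
    root := fun i => f₀^[k (s.orderEmbOfFin rfl i)] (s.orderEmbOfFin rfl i)
    index := index
    low := s.orderEmbOfFin rfl
    strictMono_low := (s.orderEmbOfFin rfl).strictMono
    root_fixed := fun i => hk _
    root_index := ?_
    index_root := ?_
    index_apply := ?_
    low_index_le := hle
    sameComp_low_root := fun i => hroot _
    sameComp_low_index := hcomp }⟩⟩
  · intro x hx
    obtain ⟨a, b, hab⟩ := sameComp_trans (sameComp_symm (hroot _)) (hcomp x)
    rwa [Function.iterate_fixed (hk _), Function.iterate_fixed hx] at hab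
  · intro i
    exact huniq _ _ (sameComp_trans (hcomp _) (sameComp_symm (hroot _)))
  · intro x
    exact huniq _ _ (sameComp_trans (hcomp _)
      (sameComp_trans (sameComp_symm (sameComp_apply f₀ x)) (sameComp_symm (hcomp x))))

namespace TreeIndexing

variable {N m : ℕ} {f₀ : Fin N → Fin N} (T : TreeIndexing f₀ m) {σ : Fin m → Fin m}

/-- The map whose underlying forest is `f₀` and which permutes the roots by `σ`. -/
noncomputable def build (σ : Fin m → Fin m) (x : Fin N) : Fin N :=
  if f₀ x = x then T.root (σ (T.index x)) else f₀ x

theorem root_injective : Function.Injective T.root := fun i j h => by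
  rw [← T.index_root i, h, T.index_root]

theorem build_root (i : Fin m) : T.build σ (T.root i) = T.root (σ i) := by
  rw [build, if_pos (T.root_fixed i), T.index_root]

theorem build_iterate_root (k : ℕ) (i : Fin m) :
    (T.build σ)^[k] (T.root i) = T.root (σ^[k] i) := by
  induction k generalizing i with
  | zero => rfl
  | succ k ih => rw [Function.iterate_succ_apply, build_root, ih, ← Function.iterate_succ_apply]

theorem sameComp_build_of_sameComp {x y : Fin N} (h : sameComp f₀ x y) :
    sameComp (T.build σ) x y := by
  refine sameComp_map id (fun x => ?_) h
  by_cases hx : f₀ x = x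
  · simp only [id, hx]
    exact sameComp_refl _ _
  · have := sameComp_apply (T.build σ) x
    rwa [build, if_neg hx] at this

theorem index_eq_of_sameComp {x y : Fin N} (h : sameComp f₀ x y) : T.index x = T.index y := by
  have key : ∀ (k : ℕ) (x : Fin N), T.index (f₀^[k] x) = T.index x := by
    intro k
    induction k with
    | zero => intro x; rfl
    | succ k ih => intro x; rw [Function.iterate_succ_apply, ih, T.index_apply]
  obtain ⟨k, l, h⟩ := h
  rw [← key k x, h, key l y]

theorem index_low (i : Fin m) : T.index (T.low i) = i := by
  rw [T.index_eq_of_sameComp (T.sameComp_low_root i), T.index_root]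

theorem sameComp_build_low (i j : Fin m) :
    sameComp (T.build σ) (T.low i) (T.low j) ↔ sameComp σ i j := by
  constructor
  · intro h
    have := sameComp_map (g := σ) T.index (fun x => ?_) h
    · rwa [T.index_low, T.index_low] at this
    · by_cases hx : f₀ x = x
      · rw [build, if_pos hx, T.index_root]
        exact sameComp_apply _ _
      · rw [build, if_neg hx, T.index_apply]
        exact sameComp_refl _ _
  · apply sameComp_map
    intro i
    have h₁ := sameComp_apply (T.build σ) (T.root i)
    rw [T.build_root] at h₁
    exact sameComp_trans (T.sameComp_build_of_sameComp (T.sameComp_low_root i))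
      (sameComp_trans h₁
        (sameComp_symm (T.sameComp_build_of_sameComp (T.sameComp_low_root (σ i)))))

/-- The pattern of a map is that of the permutation it induces on the trees of its forest, the
trees being ordered by their least elements. -/
theorem gop_build : gop (T.build σ) = gop σ := by
  have hm : minsList (T.build σ) = (minsList σ).map T.low :=
    minsList_eq_map T.strictMono_low
      (fun y => ⟨T.index y, T.low_index_le y,
        T.sameComp_build_of_sameComp (T.sameComp_low_index y)⟩)
      T.sameComp_build_low
  rw [gop_eq_map, gop_eq_map, hm, List.map_map]
  apply List.map_congr_left
  intro i _
  rw [Function.comp_apply,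
    gopOrd_eq_of_sameComp (T.sameComp_build_of_sameComp (T.sameComp_low_root i))]
  exact gopOrd_eq_of_iterate T.root_injective i fun k => T.build_iterate_root k i

theorem mem_periodicPts_build (hσ : Function.Injective σ) (x : Fin N) :
    x ∈ Function.periodicPts (T.build σ) ↔ f₀ x = x := by
  constructor
  · rintro ⟨p, hp, hx⟩
    -- The orbit of `x` enters the set of roots, which `build` preserves, and returns to `x`.
    have hc : sameComp (T.build σ) x (T.root (T.index x)) := by
      refine T.sameComp_build_of_sameComp (sameComp_trans (sameComp_symm (T.sameComp_low_index x))
        (T.sameComp_low_root _))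
    obtain ⟨k, l, hkl⟩ := hc
    rw [T.build_iterate_root] at hkl
    have hret : (T.build σ)^[p * (k + 1)] x = x := hx.mul_const (k + 1)
    have hle : k ≤ p * (k + 1) := by nlinarith
    rw [← Nat.sub_add_cancel hle, Function.iterate_add_apply, hkl, T.build_iterate_root] at hret
    rw [← hret]
    exact T.root_fixed _
  · intro hx
    obtain ⟨p, hp, hpi⟩ := hσ.mem_periodicPts (T.index x)
    refine ⟨p, hp, ?_⟩
    have := T.build_iterate_root (σ := σ) p (T.index x)
    rw [hpi.eq, T.root_index x hx] at this
    exact this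

theorem core_build (hσ : Function.Injective σ) : core (T.build σ) = f₀ := by
  funext x
  by_cases hx : f₀ x = x
  · rw [core, if_pos ((T.mem_periodicPts_build hσ x).2 hx), hx]
  · rw [core, if_neg fun h => hx ((T.mem_periodicPts_build hσ x).1 h), build, if_neg hx]

theorem exists_build_eq {f : Fin N → Fin N} (hf : core f = f₀) :
    ∃ σ : Fin m → Fin m, Function.Injective σ ∧ T.build σ = f := by
  have hper : ∀ x, x ∈ Function.periodicPts f ↔ f₀ x = x := by
    intro x
    rw [← hf]
    constructor
    · intro hx
      exact if_pos hx
    · intro hx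
      by_contra hn
      rw [core, if_neg hn] at hx
      exact hn (Function.mk_mem_periodicPts one_pos hx)
  have hval : ∀ i, T.root (T.index (f (T.root i))) = f (T.root i) := by
    intro i
    apply T.root_index
    rw [← hper]
    exact (Function.bijOn_periodicPts f).mapsTo ((hper _).2 (T.root_fixed i))
  refine ⟨fun i => T.index (f (T.root i)), ?_, ?_⟩
  · intro i j hij
    have h : f (T.root i) = f (T.root j) := by rw [← hval i, ← hval j]; exact congrArg _ hij
    exact T.root_injective ((Function.bijOn_periodicPts f).injOn ((hper _).2 (T.root_fixed i))
      ((hper _).2 (T.root_fixed j)) h)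
  · funext x
    by_cases hx : f₀ x = x
    · rw [build, if_pos hx, hval, T.root_index x hx]
    · rw [build, if_neg hx, ← hf, core, if_neg fun h => hx ((hper x).1 h)]

theorem card_fiber (T : TreeIndexing f₀ m) (L : List ℕ) :
    Nat.card {f : Fin N → Fin N // gop f = L ∧ core f = f₀} = permCount m L := by
  unfold permCount
  symm
  apply Nat.card_eq_of_bijective
    (fun σ : {σ : Fin m → Fin m // Function.Injective σ ∧ gop σ = L} =>
      (⟨T.build σ.1, T.gop_build.trans σ.2.2, T.core_build σ.2.1⟩ :
        {f : Fin N → Fin N // gop f = L ∧ core f = f₀}))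
  constructor
  · rintro ⟨σ, hσ⟩ ⟨τ, hτ⟩ h
    simp only [Subtype.mk.injEq] at h ⊢
    funext i
    apply T.root_injective
    rw [← T.build_root, ← T.build_root, h]
  · rintro ⟨f, hL, hf⟩
    obtain ⟨σ, hσ, rfl⟩ := T.exists_build_eq hf
    exact ⟨⟨σ, hσ, T.gop_build.symm.trans hL⟩, rfl⟩

end TreeIndexing

theorem card_gop_eq_sum {N : ℕ} (L : List ℕ) :
    Nat.card {f : Fin N → Fin N // gop f = L} =
      ∑ f₀ : Fin N → Fin N, Nat.card {f : Fin N → Fin N // gop f = L ∧ core f = f₀} := by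
  simp only [Nat.card_eq_fintype_card, Fintype.card_subtype]
  rw [Finset.card_eq_sum_card_fiberwise (f := core) (t := Finset.univ) (fun _ _ => by simp)]
  simp only [Finset.filter_filter]

/-- let `[ω_1, …, ω_p] = L₁ ++ [w] ++ L₂` be a global orbit pattern realized
in `F_N` with `w = ω_j ≥ 2`, and let `1 ≤ h ≤ w − 1`. Then the number of `f ∈ F_N` with
`gop f = L₁ ++ [w] ++ L₂` equals `(h + ω_{j+1} + ⋯ + ω_p)` times the number of `f ∈ F_N`
with `gop f = L₁ ++ [w − h, h] ++ L₂`. -/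
theorem card_gop_split (N : ℕ) (L₁ L₂ : List ℕ) (w h : ℕ) (hw : 2 ≤ w)
    (hh : 1 ≤ h) (hhw : h ≤ w - 1)
    (hreal : ∃ f : Fin N → Fin N, gop f = L₁ ++ [w] ++ L₂) :
    Nat.card {f : Fin N → Fin N // gop f = L₁ ++ [w] ++ L₂}
      = (h + L₂.sum) *
        Nat.card {f : Fin N → Fin N // gop f = L₁ ++ [w - h, h] ++ L₂} := by
  obtain ⟨b, rfl⟩ : ∃ b, h = b + 1 := ⟨h - 1, by omega⟩
  obtain ⟨a, rfl⟩ : ∃ a, w = a + b + 2 := ⟨w - b - 2, by omega⟩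
  rw [show a + b + 2 - (b + 1) = a + 1 by omega, card_gop_eq_sum, card_gop_eq_sum,
    Finset.mul_sum]
  refine Finset.sum_congr rfl fun f₀ _ => ?_
  by_cases hf₀ : ∃ f, core f = f₀
  · obtain ⟨f, rfl⟩ := hf₀
    obtain ⟨m, ⟨T⟩⟩ := exists_treeIndexing (core f) (exists_core_iterate_fixed f)
    rw [T.card_fiber, T.card_fiber]
    simpa using permCount_split a b L₁ L₂ m
  · have hempty : ∀ L, Nat.card {f : Fin N → Fin N // gop f = L ∧ core f = f₀} = 0 := fun L =>
      Nat.card_eq_zero.2 (Or.inl ⟨fun f => hf₀ ⟨f.1, f.2.2⟩⟩)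
    rw [hempty, hempty, Nat.mul_zero]
end

section
/- If f : X_N → X_N satisfies |f(p) − f(p+1)| ≤ 1 for all integers p with 0 ≤ p ≤ N−2, then every periodic point of f has period 1 or 2; equivalently, f(f(x)) = x for every periodic point x of f, and f has no periodic orbit of length 3 or more. -/
/-!
A map with steps of size at most one is 1-Lipschitz, so along the orbit `a n = f^[n] x` of a
periodic point the distances `|a (m + k) - a (n + k)|` are non-increasing and periodic in `k`,
hence constant: `f` is an isometry on the orbit (`periodic_orbit_isometry`). If `a 2 ≠ a 0`,
then `a (n + 2) ≠ a n` for all `n`; since consecutive increments have equal absolute value they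
can never change sign, so `a` is an arithmetic progression. Being periodic, it is constant,
which contradicts `a 2 ≠ a 0` (`periodic_isometric_sequence`).
-/

/-- A periodic sequence whose shift is nonexpanding is shifted isometrically. -/
lemma periodic_orbit_isometry (a : ℕ → ℤ) (q : ℕ) (hq : 0 < q) (hper : ∀ n, a (n + q) = a n)
    (hL : ∀ m n, |a (m + 1) - a (n + 1)| ≤ |a m - a n|) (m n : ℕ) :
    |a (m + 1) - a (n + 1)| = |a m - a n| := by
  have hanti : Antitone fun k => |a (m + k) - a (n + k)| :=
    antitone_nat_of_succ_le fun k => hL (m + k) (n + k)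
  have h := hanti (show 1 ≤ q from hq)
  simp only [hper] at h
  exact le_antisymm (hL m n) h

lemma periodic_isometric_sequence (a : ℕ → ℤ) (q : ℕ) (hq : 0 < q) (hper : a q = a 0)
    (hiso : ∀ m n, |a (m + 1) - a (n + 1)| = |a m - a n|) : a 2 = a 0 := by
  by_contra hne
  have hne' : ∀ n, a (n + 2) ≠ a n := by
    intro n
    induction n with
    | zero => exact hne
    | succ n ih =>
      intro h
      have h1 := hiso (n + 2) n
      rw [show n + 2 + 1 = n + 1 + 2 by ring, h, sub_self, abs_zero] at h1
      exact ih (sub_eq_zero.mp (abs_eq_zero.mp h1.symm))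
  have hstep : ∀ n, a (n + 1) - a n = a 1 - a 0 := by
    intro n
    induction n with
    | zero => rfl
    | succ n ih =>
      have h1 := hiso (n + 1) n
      have h2 := hne' n
      rcases abs_eq_abs.mp h1 with h | h
      · rw [h, ih]
      · exact absurd (by rw [show n + 2 = n + 1 + 1 by ring]; linarith) h2
  have hlin : ∀ n : ℕ, a n = a 0 + n * (a 1 - a 0) := by
    intro n
    induction n with
    | zero => simp
    | succ n ih =>
      have := hstep n
      push_cast
      linarith
  have h0 : (q : ℤ) * (a 1 - a 0) = 0 := by linarith [hlin q]
  have hd : a 1 - a 0 = 0 := by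
    rcases mul_eq_zero.mp h0 with h | h
    · omega
    · exact h
  exact hne (by rw [hlin 2, hd]; simp)

/-- if `f : X_N → X_N` satisfies `|f(p) − f(p+1)| ≤ 1` for all
`0 ≤ p ≤ N−2`, then every periodic point of `f` has period `1` or `2`: for every
periodic point `x` we have `f(f(x)) = x` (so there is no periodic orbit of length
`3` or more). -/
theorem periodic_points_of_slope_le_one (N : ℕ) (f : Fin N → Fin N)
    (hf : ∀ p : ℕ, ∀ hp : p + 1 < N,
      |((f ⟨p, Nat.lt_of_succ_lt hp⟩ : ℕ) : ℤ) - ((f ⟨p + 1, hp⟩ : ℕ) : ℤ)| ≤ 1) :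
    ∀ x : Fin N, (∃ q : ℕ, 0 < q ∧ f^[q] x = x) → f (f x) = x := by
  rintro x ⟨q, hq, hx⟩
  have hlip : ∀ (k i : ℕ) (h : i + k < N),
      |((f ⟨i + k, h⟩ : ℕ) : ℤ) - ((f ⟨i, by omega⟩ : ℕ) : ℤ)| ≤ k := by
    intro k
    induction k with
    | zero => intro i h; simp
    | succ k ih =>
      intro i h
      have h1 := abs_le.mp (ih i (by omega))
      have h2 := abs_le.mp (hf (i + k) h)
      rw [abs_le]
      simp only [← add_assoc]
      push_cast
      constructor <;> linarith [h1.1, h1.2, h2.1, h2.2]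
  have hlip_le : ∀ u v : Fin N, v ≤ u →
      |((f u : ℕ) : ℤ) - ((f v : ℕ) : ℤ)| ≤ |((u : ℕ) : ℤ) - ((v : ℕ) : ℤ)| := by
    rintro ⟨u, hu⟩ ⟨v, hv⟩ h
    obtain ⟨k, rfl⟩ := Nat.exists_eq_add_of_le (show v ≤ u from h)
    simpa using hlip k v hu
  have hlip' : ∀ u v : Fin N,
      |((f u : ℕ) : ℤ) - ((f v : ℕ) : ℤ)| ≤ |((u : ℕ) : ℤ) - ((v : ℕ) : ℤ)| := by
    intro u v
    rcases le_total v u with h | h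
    · exact hlip_le u v h
    · rw [abs_sub_comm, abs_sub_comm ((u : ℕ) : ℤ)]
      exact hlip_le v u h
  have hiso := periodic_orbit_isometry (fun n => ((f^[n] x : Fin N) : ℕ)) q hq
    (fun n => by simp only [Function.iterate_add_apply, hx])
    (fun m n => by
      simp only [Function.iterate_succ_apply']
      exact hlip' _ _)
  have h := periodic_isometric_sequence (fun n => ((f^[n] x : Fin N) : ℕ)) q hq
    (by simp [hx]) hiso
  apply Fin.ext
  simpa using h
end
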